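/- arXiv:2307.09606 — 4 statements merged into one kernel-verified Lean document; each statement's English description precedes it below -/
import Mathlib

section
/- Let E be a finite set and let f : E → {a,b,c,d} be a uniformly random coloring. For any closed downward families 𝒰, 𝒱, 𝒲 of subsets of E, writing 𝒰_{ab} for the event {E_{ab}(f) ∈ 𝒰}, 𝒱_{ac} for {E_{ac}(f) ∈ 𝒱}, and 𝒲_{bc} for {E_{bc}(f) ∈ 𝒲}, one has P(𝒰_{ab} ∩ 𝒱_{ac} ∩ 𝒲_{bc}) ≥ P(𝒰_{ab}) · P(𝒱_{ac}) · P(𝒲_{bc}). -/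
open Finset

/-- `Est f s t` is the set of elements colored `s` or `t` by the coloring `f`.
Colors: `a = 0`, `b = 1`, `c = 2`, `d = 3`. -/
def Est {E : Type*} [Fintype E] [DecidableEq E] (f : E → Fin 4) (s t : Fin 4) : Finset E :=
  Finset.univ.filter (fun e => f e = s ∨ f e = t)

/-- Summing over functions on `Fin (n + 1)` amounts to summing over the value at `0` and the rest. -/
lemma sum_fin_succ_arrow {α M : Type*} [Fintype α] [AddCommMonoid M] (n : ℕ)
    (F : (Fin (n + 1) → α) → M) :
    ∑ f, F f = ∑ a, ∑ g : Fin n → α, F (Fin.cons a g) := by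
  rw [← Fintype.sum_prod_type']
  exact (Equiv.sum_comp (Fin.consEquiv fun _ => α) F).symm

/-- The indicator that a color is `s` or `t`. -/
def colorIn (s t c : Fin 4) : Bool := decide (c = s ∨ c = t)

lemma antitone_cons {n : ℕ} {u : (Fin (n + 1) → Bool) → ℚ} (hu : Antitone u) (b : Bool) :
    Antitone fun x : Fin n → Bool => u (Fin.cons b x : Fin (n + 1) → Bool) :=
  fun _ _ h => hu (Fin.cons_le_cons.2 ⟨le_rfl, h⟩)

lemma sum_cons_true_le_sum_cons_false {n : ℕ} {u : (Fin (n + 1) → Bool) → ℚ} (hu : Antitone u)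
    (p : Fin 4 → Bool) :
    ∑ g : Fin n → Fin 4, u (Fin.cons true (p ∘ g) : Fin (n + 1) → Bool) ≤
      ∑ g : Fin n → Fin 4, u (Fin.cons false (p ∘ g) : Fin (n + 1) → Bool) :=
  sum_le_sum fun _ _ => hu (Fin.cons_le_cons.2 ⟨Bool.false_le _, le_rfl⟩)

/-- Positive dependence for nonnegative antitone functions of the three color-pair indicators,
on the index set `Fin n`. -/
lemma sum_mul_sum_mul_sum_le_of_antitone (n : ℕ) (u v w : (Fin n → Bool) → ℚ)
    (hu : Antitone u) (hv : Antitone v) (hw : Antitone w)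
    (hu₀ : ∀ x, 0 ≤ u x) (hv₀ : ∀ x, 0 ≤ v x) (hw₀ : ∀ x, 0 ≤ w x) :
    (∑ f : Fin n → Fin 4, u (colorIn 0 1 ∘ f)) * (∑ f : Fin n → Fin 4, v (colorIn 0 2 ∘ f)) *
        (∑ f : Fin n → Fin 4, w (colorIn 1 2 ∘ f)) ≤
      16 ^ n * ∑ f : Fin n → Fin 4,
        u (colorIn 0 1 ∘ f) * v (colorIn 0 2 ∘ f) * w (colorIn 1 2 ∘ f) := by
  induction n with
  | zero => simp
  | succ n ih =>
    have step (i j k : Bool) := ih _ _ _ (antitone_cons hu i) (antitone_cons hv j)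
      (antitone_cons hw k) (fun _ => hu₀ _) (fun _ => hv₀ _) (fun _ => hw₀ _)
    have hcons (p : Fin 4 → Bool) (a : Fin 4) (g : Fin n → Fin 4) :
        p ∘ (Fin.cons a g : Fin (n + 1) → Fin 4) = Fin.cons (p a) (p ∘ g) :=
      Fin.comp_cons p a g
    have h00 : colorIn 0 1 0 = true := rfl
    have h01 : colorIn 0 1 1 = true := rfl
    have h02 : colorIn 0 1 2 = false := rfl
    have h03 : colorIn 0 1 3 = false := rfl
    have h10 : colorIn 0 2 0 = true := rfl
    have h11 : colorIn 0 2 1 = false := rfl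
    have h12 : colorIn 0 2 2 = true := rfl
    have h13 : colorIn 0 2 3 = false := rfl
    have h20 : colorIn 1 2 0 = false := rfl
    have h21 : colorIn 1 2 1 = true := rfl
    have h22 : colorIn 1 2 2 = true := rfl
    have h23 : colorIn 1 2 3 = false := rfl
    simp only [sum_fin_succ_arrow n, hcons, Fin.sum_univ_four, h00, h01, h02, h03, h10, h11, h12,
      h13, h20, h21, h22, h23]
    have hd := mul_nonneg (mul_nonneg
      (sub_nonneg.2 (sum_cons_true_le_sum_cons_false hu (colorIn 0 1)))
      (sub_nonneg.2 (sum_cons_true_le_sum_cons_false hv (colorIn 0 2))))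
      (sub_nonneg.2 (sum_cons_true_le_sum_cons_false hw (colorIn 1 2)))
    have h₁ := step true true false
    have h₂ := step true false true
    have h₃ := step false true true
    have h₄ := step false false false
    rw [pow_succ]
    linarith

/-- The indicator of the event that the set of `e` with `x (φ e)` belongs to `𝒰`. -/
def memIndicator {E : Type*} [Fintype E] [DecidableEq E] {n : ℕ} (φ : E ≃ Fin n)
    (𝒰 : Finset (Finset E)) (x : Fin n → Bool) : ℚ :=
  if univ.filter (fun e => x (φ e) = true) ∈ 𝒰 then 1 else 0

section memIndicator

variable {E : Type*} [Fintype E] [DecidableEq E] {n : ℕ} (φ : E ≃ Fin n) (𝒰 : Finset (Finset E))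

lemma memIndicator_nonneg (x : Fin n → Bool) : 0 ≤ memIndicator φ 𝒰 x := by
  unfold memIndicator
  split_ifs <;> norm_num

lemma antitone_memIndicator {𝒰 : Finset (Finset E)}
    (hU : ∀ A ∈ 𝒰, ∀ B : Finset E, B ⊆ A → B ∈ 𝒰) : Antitone (memIndicator φ 𝒰) := by
  intro x y hxy
  by_cases hy : univ.filter (fun e => y (φ e) = true) ∈ 𝒰
  · have hx : univ.filter (fun e => x (φ e) = true) ∈ 𝒰 :=
      hU _ hy _ (monotone_filter_right _ fun e _ he => hxy (φ e) he)
    simp [memIndicator, hx, hy]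
  · simpa [memIndicator, hy] using memIndicator_nonneg φ 𝒰 x

lemma memIndicator_colorIn (s t : Fin 4) (f : E → Fin 4) :
    memIndicator φ 𝒰 (colorIn s t ∘ f ∘ φ.symm) = if Est f s t ∈ 𝒰 then 1 else 0 := by
  have h : univ.filter (fun e => (colorIn s t ∘ f ∘ φ.symm) (φ e) = true) = Est f s t := by
    ext e
    simp [colorIn, Est]
  rw [memIndicator, h]

end memIndicator

/-- For a uniformly random 4-coloring of a finite set `E` and closed downward families
`𝒰, 𝒱, 𝒲`:
`P(𝒰_{ab} ∩ 𝒱_{ac} ∩ 𝒲_{bc}) ≥ P(𝒰_{ab}) · P(𝒱_{ac}) · P(𝒲_{bc})`. -/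
theorem colored_percolation_downward_pos_dep (E : Type*) [Fintype E] [DecidableEq E]
    (𝒰 𝒱 𝒲 : Finset (Finset E))
    (hU : ∀ A ∈ 𝒰, ∀ B : Finset E, B ⊆ A → B ∈ 𝒰)
    (hV : ∀ A ∈ 𝒱, ∀ B : Finset E, B ⊆ A → B ∈ 𝒱)
    (hW : ∀ A ∈ 𝒲, ∀ B : Finset E, B ⊆ A → B ∈ 𝒲) :
    ((Finset.univ.filter (fun f : E → Fin 4 =>
        Est f 0 1 ∈ 𝒰 ∧ Est f 0 2 ∈ 𝒱 ∧ Est f 1 2 ∈ 𝒲)).card : ℚ)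
        / 4 ^ Fintype.card E
      ≥ (((Finset.univ.filter (fun f : E → Fin 4 => Est f 0 1 ∈ 𝒰)).card : ℚ)
            / 4 ^ Fintype.card E)
        * (((Finset.univ.filter (fun f : E → Fin 4 => Est f 0 2 ∈ 𝒱)).card : ℚ)
            / 4 ^ Fintype.card E)
        * (((Finset.univ.filter (fun f : E → Fin 4 => Est f 1 2 ∈ 𝒲)).card : ℚ)
            / 4 ^ Fintype.card E) := by
  let φ := Fintype.equivFin E
  have key := sum_mul_sum_mul_sum_le_of_antitone _ _ _ _ (antitone_memIndicator φ hU)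
    (antitone_memIndicator φ hV) (antitone_memIndicator φ hW) (memIndicator_nonneg φ 𝒰)
    (memIndicator_nonneg φ 𝒱) (memIndicator_nonneg φ 𝒲)
  have htransport (F : (Fin (Fintype.card E) → Fin 4) → ℚ) :
      ∑ f, F f = ∑ f : E → Fin 4, F (f ∘ φ.symm) :=
    (Equiv.sum_comp (φ.arrowCongr (Equiv.refl (Fin 4))) F).symm
  simp only [htransport, memIndicator_colorIn, ite_zero_mul_ite_zero, mul_one, sum_boole,
    and_assoc] at key
  have h16 : (16 : ℚ) ^ Fintype.card E = 4 ^ Fintype.card E * 4 ^ Fintype.card E := by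
    rw [← mul_pow]
    norm_num
  have h4 : (0 : ℚ) < 4 ^ Fintype.card E := by positivity
  rw [h16] at key
  rw [ge_iff_le, div_mul_div_comm, div_mul_div_comm, div_le_div_iff₀ (by positivity) h4]
  nlinarith [mul_le_mul_of_nonneg_right key h4.le]
end

section
/- Let E be a finite set and let f : E → {a,b,c,d} be a uniformly random coloring. For any closed upward family 𝒰 of subsets of E, writing 𝒰_{st} for the event {E_{st}(f) ∈ 𝒰} and P_{1/2}(𝒰) := |𝒰| / 2^{|E|}, one has P_{1/2}(𝒰)^3 ≤ P(𝒰_{ab} ∩ 𝒰_{ac} ∩ 𝒰_{ad}) ≤ P_{1/2}(𝒰)^2. -/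
open Finset

/-- A three-function correlation inequality on the cube of subsets of `s`: for uniform independent
`A`, `B ⊆ s`, the triple `A`, `B`, `s \ (A ∆ B)` is
positively correlated. -/
theorem sum_mul_sum_mul_sum_le_sum_symmDiff {E : Type*} [DecidableEq E] (s : Finset E)
    {u v w : Finset E → ℚ} (hu : Monotone u) (hv : Monotone v) (hw : Monotone w) :
    (∑ A ∈ s.powerset, u A) * (∑ A ∈ s.powerset, v A) * (∑ A ∈ s.powerset, w A) ≤
      2 ^ s.card * ∑ A ∈ s.powerset, ∑ B ∈ s.powerset, u A * v B * w (s \ symmDiff A B) := by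
  induction s using Finset.induction_on generalizing u v w with
  | empty => simp
  | insert e s he ih =>
    have mono_add {f : Finset E → ℚ} (hf : Monotone f) :
        Monotone fun A => f A + f (insert e A) :=
      fun A B h => add_le_add (hf h) (hf (insert_subset_insert e h))
    have diff_nonneg {f : Finset E → ℚ} (hf : Monotone f) (A : Finset E) :
        0 ≤ f (insert e A) - f A := sub_nonneg.2 (hf (subset_insert e A))
    have key := ih (mono_add hu) (mono_add hv) (mono_add hw)
    simp only [sum_powerset_insert he, ← sum_add_distrib, card_insert_of_notMem he, pow_succ,
      mul_assoc (2 ^ s.card : ℚ)]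
    refine key.trans ?_
    gcongr
    rw [mul_sum]
    refine sum_le_sum fun A hA => ?_
    rw [mul_sum]
    refine sum_le_sum fun B hB => ?_
    have hA' : e ∉ A := fun h => he (mem_powerset.1 hA h)
    have hB' : e ∉ B := fun h => he (mem_powerset.1 hB h)
    have h00 : insert e s \ symmDiff A B = insert e (s \ symmDiff A B) := by
      ext x
      by_cases hx : x = e <;> simp [mem_symmDiff, hx, he, hA', hB']
    have h01 : insert e s \ symmDiff A (insert e B) = s \ symmDiff A B := by
      ext x
      by_cases hx : x = e <;> simp [mem_symmDiff, hx, he, hA', hB']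
    have h10 : insert e s \ symmDiff (insert e A) B = s \ symmDiff A B := by
      ext x
      by_cases hx : x = e <;> simp [mem_symmDiff, hx, he, hA', hB']
    have h11 : insert e s \ symmDiff (insert e A) (insert e B) = insert e (s \ symmDiff A B) := by
      ext x
      by_cases hx : x = e <;> simp [mem_symmDiff, hx, he, hA', hB']
    rw [h00, h01, h10, h11]
    have := mul_nonneg (mul_nonneg (diff_nonneg hu A) (diff_nonneg hv B))
      (diff_nonneg hw (s \ symmDiff A B))
    linarith

theorem Est_zero_three {E : Type*} [Fintype E] [DecidableEq E] (f : E → Fin 4) :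
    Est f 0 3 = univ \ symmDiff (Est f 0 1) (Est f 0 2) := by
  ext e
  simp only [Est, mem_sdiff, mem_symmDiff, mem_filter, mem_univ, true_and]
  generalize f e = i
  revert i
  decide

/-- A coloring amounts to the pair of sets `E_{ab}`, `E_{ac}`. -/
theorem bijective_Est_pair {E : Type*} [Fintype E] [DecidableEq E] :
    Function.Bijective fun f : E → Fin 4 => (Est f 0 1, Est f 0 2) := by
  constructor
  · intro f g h
    simp only [Prod.mk.injEq, Finset.ext_iff, Est, mem_filter, mem_univ, true_and] at h
    funext e
    have h1 := h.1 e
    have h2 := h.2 e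
    generalize f e = i at *
    generalize g e = j at *
    revert i j
    decide
  · rintro ⟨A, B⟩
    refine ⟨fun e => if e ∈ A then if e ∈ B then 0 else 1 else if e ∈ B then 2 else 3, ?_⟩
    ext e <;> by_cases hA : e ∈ A <;> by_cases hB : e ∈ B <;> simp [Est, hA, hB]

/-- The pair `E_{ab}`, `E_{ac}` of a uniformly random coloring is uniformly distributed. -/
theorem sum_Est_pair {E : Type*} [Fintype E] [DecidableEq E]
    (F : Finset E → Finset E → ℚ) :
    ∑ f : E → Fin 4, F (Est f 0 1) (Est f 0 2) = ∑ A, ∑ B, F A B := by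
  rw [← Fintype.sum_prod_type']
  exact bijective_Est_pair.sum_comp fun p : Finset E × Finset E => F p.1 p.2

/-- For a uniformly random 4-coloring of a finite set `E` and a closed upward family `𝒰`,
writing `P_{1/2}(𝒰) = |𝒰| / 2^{|E|}`:
`P_{1/2}(𝒰)^3 ≤ P(𝒰_{ab} ∩ 𝒰_{ac} ∩ 𝒰_{ad}) ≤ P_{1/2}(𝒰)^2`. -/
theorem colored_percolation_sandwich (E : Type*) [Fintype E] [DecidableEq E]
    (𝒰 : Finset (Finset E))
    (hU : ∀ A ∈ 𝒰, ∀ B : Finset E, A ⊆ B → B ∈ 𝒰) :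
    ((𝒰.card : ℚ) / 2 ^ Fintype.card E) ^ 3
      ≤ ((Finset.univ.filter (fun f : E → Fin 4 =>
            Est f 0 1 ∈ 𝒰 ∧ Est f 0 2 ∈ 𝒰 ∧ Est f 0 3 ∈ 𝒰)).card : ℚ)
          / 4 ^ Fintype.card E ∧
    ((Finset.univ.filter (fun f : E → Fin 4 =>
        Est f 0 1 ∈ 𝒰 ∧ Est f 0 2 ∈ 𝒰 ∧ Est f 0 3 ∈ 𝒰)).card : ℚ)
        / 4 ^ Fintype.card E
      ≤ ((𝒰.card : ℚ) / 2 ^ Fintype.card E) ^ 2 := by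
  let u : Finset E → ℚ := fun A => if A ∈ 𝒰 then 1 else 0
  have hu : Monotone u := by
    intro A B h
    by_cases hA : A ∈ 𝒰
    · simp [u, hA, hU A hA B h]
    · simp only [u, hA, if_false]
      split_ifs <;> norm_num
  have hsum : ∑ A, u A = 𝒰.card := by simp [u]
  have hcard : ((Finset.univ.filter (fun f : E → Fin 4 =>
      Est f 0 1 ∈ 𝒰 ∧ Est f 0 2 ∈ 𝒰 ∧ Est f 0 3 ∈ 𝒰)).card : ℚ) =
      ∑ A, ∑ B, u A * u B * u (univ \ symmDiff A B) := by
    rw [← sum_Est_pair fun A B => u A * u B * u (univ \ symmDiff A B)]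
    simp only [← Est_zero_three, u, card_filter, Nat.cast_sum, Nat.cast_ite, Nat.cast_one,
      Nat.cast_zero, ite_and, ite_mul, one_mul, zero_mul]
  have lower := sum_mul_sum_mul_sum_le_sum_symmDiff univ hu hu hu
  rw [powerset_univ, hsum, ← hcard, card_univ] at lower
  have upper : ∑ A, ∑ B, u A * u B * u (univ \ symmDiff A B) ≤ (𝒰.card : ℚ) ^ 2 := by
    rw [← hsum, sq, sum_mul_sum]
    refine sum_le_sum fun A _ => sum_le_sum fun B _ => ?_
    simp only [u]
    split_ifs <;> norm_num
  rw [← hcard] at upper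
  have hfour : (4 : ℚ) ^ Fintype.card E = (2 ^ Fintype.card E) ^ 2 := by
    rw [← pow_mul, mul_comm, pow_mul]
    norm_num
  rw [hfour, div_pow, div_pow]
  constructor
  · rw [div_le_div_iff₀ (by positivity) (by positivity)]
    have := mul_le_mul_of_nonneg_right lower (by positivity : (0 : ℚ) ≤ (2 ^ Fintype.card E) ^ 2)
    linarith
  · gcongr
end

section
/- Let E be a finite set and let f : E → {a,b,c,d} be a uniformly random coloring. For any closed upward families 𝒰, 𝒱, 𝒲 of subsets of E, P(E_{ab}(f) ∈ 𝒰 and E_{ac}(f) ∈ 𝒱 and E_{bc}(f) ∈ 𝒲) ≤ P_{1/2}(𝒰) · P_{1/2}(𝒱) · P_{1/2}(𝒲), where P_{1/2}(𝒜) := |𝒜| / 2^{|E|}. -/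
open Finset

/-- Three monotone functions of `A`, `B` and `A ∆ B`, for independent uniform subsets `A`, `B`
of `s`, are negatively correlated. -/
theorem two_pow_card_mul_sum_powerset_symmDiff_le {E : Type*} [DecidableEq E] (s : Finset E)
    (F G H : Finset E → ℚ) (hF : Monotone F) (hG : Monotone G) (hH : Monotone H) :
    2 ^ s.card * ∑ A ∈ s.powerset, ∑ B ∈ s.powerset, F A * G B * H (symmDiff A B)
      ≤ (∑ A ∈ s.powerset, F A) * (∑ A ∈ s.powerset, G A) * ∑ A ∈ s.powerset, H A := by
  induction s using Finset.induction_on generalizing F G H with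
  | empty => simp
  | insert a s ha ih =>
    have mono_insert (K : Finset E → ℚ) (hK : Monotone K) : Monotone fun A => K (insert a A) :=
      fun A B h => hK (insert_subset_insert a h)
    have sum_le (K : Finset E → ℚ) (hK : Monotone K) :
        ∑ A ∈ s.powerset, K A ≤ ∑ A ∈ s.powerset, K (insert a A) :=
      sum_le_sum fun A _ => hK (subset_insert a A)
    have notMem {A : Finset E} (hA : A ∈ s.powerset) : a ∉ A := fun h => ha (mem_powerset.1 hA h)
    have split : ∑ A ∈ (insert a s).powerset, ∑ B ∈ (insert a s).powerset,
          F A * G B * H (symmDiff A B)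
        = ∑ A ∈ s.powerset, ∑ B ∈ s.powerset, F A * G B * H (symmDiff A B)
          + ∑ A ∈ s.powerset, ∑ B ∈ s.powerset, F A * G (insert a B) * H (insert a (symmDiff A B))
          + (∑ A ∈ s.powerset, ∑ B ∈ s.powerset,
              F (insert a A) * G B * H (insert a (symmDiff A B))
            + ∑ A ∈ s.powerset, ∑ B ∈ s.powerset,
              F (insert a A) * G (insert a B) * H (symmDiff A B)) := by
      simp only [sum_powerset_insert ha, sum_add_distrib]
      congr 2
      all_goals
        refine sum_congr rfl fun A hA => sum_congr rfl fun B hB => ?_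
        have hA := notMem hA
        have hB := notMem hB
        congr 2
        ext x
        by_cases hx : x = a <;> simp_all [mem_symmDiff]
    rw [split, card_insert_of_notMem ha, pow_succ]
    simp only [sum_powerset_insert ha]
    have h₀₀ := ih F G H hF hG hH
    have h₀₁ := ih F _ _ hF (mono_insert G hG) (mono_insert H hH)
    have h₁₀ := ih _ G _ (mono_insert F hF) hG (mono_insert H hH)
    have h₁₁ := ih _ _ H (mono_insert F hF) (mono_insert G hG) hH
    have hprod := mul_nonneg (mul_nonneg (sub_nonneg.2 (sum_le F hF)) (sub_nonneg.2 (sum_le G hG)))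
      (sub_nonneg.2 (sum_le H hH))
    linarith

/-- A coloring is determined by its color classes `{a, b}` and `{a, c}`. -/
theorem Est_pair_injective {E : Type*} [Fintype E] [DecidableEq E] :
    Function.Injective fun f : E → Fin 4 => (Est f 0 1, Est f 0 2) := by
  intro f g h
  funext e
  have h₁ := Finset.ext_iff.1 (congrArg Prod.fst h) e
  have h₂ := Finset.ext_iff.1 (congrArg Prod.snd h) e
  simp only [Est, mem_filter, mem_univ, true_and] at h₁ h₂
  generalize f e = x at *
  generalize g e = y at *
  clear h
  revert x y
  decide

theorem symmDiff_Est {E : Type*} [Fintype E] [DecidableEq E] (f : E → Fin 4) :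
    symmDiff (Est f 0 1) (Est f 0 2) = Est f 1 2 := by
  ext e
  simp only [Est, mem_symmDiff, mem_filter, mem_univ, true_and]
  generalize f e = x
  revert x
  decide

/-- The indicator function of an upward closed family is monotone. -/
theorem monotone_indicator_of_upward_closed {E : Type*} [DecidableEq E] (𝒜 : Finset (Finset E))
    (h𝒜 : ∀ A ∈ 𝒜, ∀ B : Finset E, A ⊆ B → B ∈ 𝒜) :
    Monotone fun A => if A ∈ 𝒜 then (1 : ℚ) else 0 := by
  intro A B hAB
  by_cases hA : A ∈ 𝒜
  · simp [hA, h𝒜 A hA B hAB]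
  · simp only [hA, if_false]
    split_ifs <;> norm_num

/-- For a uniformly random 4-coloring of a finite set `E` and closed upward families
`𝒰, 𝒱, 𝒲`, with `P_{1/2}(𝒜) = |𝒜| / 2^{|E|}`:
`P(E_{ab}(f) ∈ 𝒰 ∧ E_{ac}(f) ∈ 𝒱 ∧ E_{bc}(f) ∈ 𝒲) ≤ P_{1/2}(𝒰) · P_{1/2}(𝒱) · P_{1/2}(𝒲)`. -/
theorem colored_percolation_upward_symmetric_bound (E : Type*) [Fintype E] [DecidableEq E]
    (𝒰 𝒱 𝒲 : Finset (Finset E))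
    (hU : ∀ A ∈ 𝒰, ∀ B : Finset E, A ⊆ B → B ∈ 𝒰)
    (hV : ∀ A ∈ 𝒱, ∀ B : Finset E, A ⊆ B → B ∈ 𝒱)
    (hW : ∀ A ∈ 𝒲, ∀ B : Finset E, A ⊆ B → B ∈ 𝒲) :
    ((Finset.univ.filter (fun f : E → Fin 4 =>
        Est f 0 1 ∈ 𝒰 ∧ Est f 0 2 ∈ 𝒱 ∧ Est f 1 2 ∈ 𝒲)).card : ℚ)
        / 4 ^ Fintype.card E
      ≤ ((𝒰.card : ℚ) / 2 ^ Fintype.card E)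
        * ((𝒱.card : ℚ) / 2 ^ Fintype.card E)
        * ((𝒲.card : ℚ) / 2 ^ Fintype.card E) := by
  have hcard : ((univ.filter (fun f : E → Fin 4 =>
      Est f 0 1 ∈ 𝒰 ∧ Est f 0 2 ∈ 𝒱 ∧ Est f 1 2 ∈ 𝒲)).card : ℚ)
      ≤ ∑ A : Finset E, ∑ B : Finset E, (if A ∈ 𝒰 then (1 : ℚ) else 0)
        * (if B ∈ 𝒱 then 1 else 0) * (if symmDiff A B ∈ 𝒲 then 1 else 0) := by
    have hle : (univ.filter (fun f : E → Fin 4 =>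
        Est f 0 1 ∈ 𝒰 ∧ Est f 0 2 ∈ 𝒱 ∧ Est f 1 2 ∈ 𝒲)).card
        ≤ (univ.filter (fun p : Finset E × Finset E =>
          (p.1 ∈ 𝒰 ∧ p.2 ∈ 𝒱) ∧ symmDiff p.1 p.2 ∈ 𝒲)).card := by
      refine card_le_card_of_injOn _ (fun f hf => ?_) Est_pair_injective.injOn
      simpa [symmDiff_Est, and_assoc] using hf
    refine (Nat.cast_le.2 hle).trans_eq ?_
    rw [← Fintype.sum_prod_type', card_filter]
    push_cast
    refine sum_congr rfl fun p _ => ?_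
    simp only [ite_and, mul_ite, mul_one, mul_zero]
    split_ifs <;> rfl
  have key := two_pow_card_mul_sum_powerset_symmDiff_le (univ : Finset E) _ _ _
    (monotone_indicator_of_upward_closed 𝒰 hU) (monotone_indicator_of_upward_closed 𝒱 hV)
    (monotone_indicator_of_upward_closed 𝒲 hW)
  simp only [powerset_univ, card_univ] at key
  have sum_indicator (𝒜 : Finset (Finset E)) :
      ∑ A : Finset E, (if A ∈ 𝒜 then (1 : ℚ) else 0) = 𝒜.card := by
    simp
  rw [sum_indicator, sum_indicator, sum_indicator] at key
  have hbound := (mul_le_mul_of_nonneg_left hcard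
    (pow_nonneg zero_le_two (Fintype.card E))).trans key
  have four_pow : (4 : ℚ) ^ Fintype.card E = 2 ^ Fintype.card E * 2 ^ Fintype.card E := by
    rw [← mul_pow]
    norm_num
  have hpos : (0 : ℚ) < 2 ^ Fintype.card E := by positivity
  rw [four_pow, div_mul_div_comm, div_mul_div_comm, div_le_div_iff₀ (by positivity) (by positivity)]
  nlinarith [mul_le_mul_of_nonneg_left hbound (mul_pos hpos hpos).le]
end

section
/- For each m ≥ 0 let E_m be a finite set with |E_m| = 2m+1, let f : E_m → {a,b,c,d} be a uniformly random coloring. Then the probability P(|E_{ab}(f)| > m and |E_{ac}(f)| > m and |E_{ad}(f)| > m) converges to 1/8 as m → ∞. -/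
open Finset

section SignVectors

variable {E : Type*} [Fintype E]

/-- The sum of the entries of a vector of signs. -/
def signSum (y : E → ℤˣ) : ℤ := ∑ e, (y e : ℤ)

lemma signSum_neg (y : E → ℤˣ) : signSum (-y) = -signSum y := by
  simp [signSum]

lemma signSum_eq (y : E → ℤˣ) : signSum y = 2 * #{e | y e = 1} - Fintype.card E := by
  have h : ∀ e, (y e : ℤ) = 2 * (if y e = 1 then 1 else 0) - 1 := by
    intro e
    rcases Int.units_eq_one_or (y e) with h | h <;> simp [h]
  simp only [signSum, h, Finset.sum_sub_distrib, ← Finset.mul_sum]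
  simp

lemma signSum_comp_perm (y : E → ℤˣ) (σ : Equiv.Perm E) : signSum (y ∘ σ) = signSum y :=
  Equiv.sum_comp σ fun e => (y e : ℤ)

lemma signSum_ne_zero (hE : Odd (Fintype.card E)) (y : E → ℤˣ) : signSum y ≠ 0 := by
  rw [signSum_eq]
  obtain ⟨k, hk⟩ := hE
  omega

variable [DecidableEq E]

/-- The correlation, summed over all sign vectors `y`, of the majority signs of `y` and `x * y`. -/
def majorityCorr (x : E → ℤˣ) : ℤ :=
  ∑ y : E → ℤˣ, Int.sign (signSum y) * Int.sign (signSum (x * y))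

lemma card_signSum_eq_le (j : ℤ) :
    #{y : E → ℤˣ | signSum y = j} ≤ (Fintype.card E).choose (Fintype.card E / 2) := by
  obtain h | ⟨y₀, hy₀⟩ := (Finset.univ.filter fun y : E → ℤˣ => signSum y = j).eq_empty_or_nonempty
  · simp [h]
  refine le_trans ?_ (Nat.choose_le_middle #{e | y₀ e = 1} (Fintype.card E))
  rw [← Finset.card_univ, ← Finset.card_powersetCard]
  refine Finset.card_le_card_of_injOn (fun y => Finset.univ.filter fun e => y e = 1) ?_ ?_
  · intro y hy
    simp only [Finset.coe_filter, Finset.mem_univ, true_and, Set.mem_ofPred_eq,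
      Finset.mem_filter] at hy hy₀
    simp only [Finset.mem_coe, Finset.mem_powersetCard, Finset.subset_univ, true_and]
    rw [signSum_eq] at hy hy₀
    omega
  · intro y _ z _ h
    funext e
    have he := Finset.ext_iff.mp h e
    simp only [Finset.mem_filter, Finset.mem_univ, true_and] at he
    rcases Int.units_eq_one_or (y e) with h1 | h1 <;>
      rcases Int.units_eq_one_or (z e) with h2 | h2 <;> simp_all

lemma card_abs_signSum_le (t : ℕ) :
    #{y : E → ℤˣ | |signSum y| ≤ t} ≤
      (2 * t + 1) * (Fintype.card E).choose (Fintype.card E / 2) := by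
  have h := Finset.card_le_mul_card_image_of_maps_to (f := signSum)
    (s := Finset.univ.filter fun y : E → ℤˣ => |signSum y| ≤ t) (t := Finset.Icc (-t : ℤ) t)
    (fun y hy => by simpa [abs_le] using hy) ((Fintype.card E).choose (Fintype.card E / 2))
    (fun j _ => (Finset.card_le_card (by
      intro y hy
      simp only [Finset.mem_filter, Finset.mem_univ, true_and] at hy ⊢
      exact hy.2)).trans (card_signSum_eq_le j))
  rw [Int.card_Icc] at h
  convert h using 1
  rw [mul_comm]
  congr 1
  omega

lemma sum_mul_apply_eq_zero {e e' : E} (h : e ≠ e') :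
    ∑ y : E → ℤˣ, (y e : ℤ) * y e' = 0 := by
  have key := Equiv.sum_comp (Equiv.mulRight (Pi.mulSingle e (-1 : ℤˣ)))
    fun y : E → ℤˣ => (y e : ℤ) * y e'
  simp only [Equiv.coe_mulRight, Pi.mul_apply, Pi.mulSingle_eq_same,
    Pi.mulSingle_eq_of_ne h.symm, mul_one, mul_neg, Units.val_neg, neg_mul,
    Finset.sum_neg_distrib] at key
  omega

lemma sum_sq_sum (T : Finset E) :
    ∑ y : E → ℤˣ, (∑ e ∈ T, (y e : ℤ)) ^ 2 = #T * 2 ^ Fintype.card E := by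
  simp only [sq, Finset.sum_mul_sum]
  rw [Finset.sum_comm, Finset.cast_card, Finset.sum_mul]
  refine Finset.sum_congr rfl fun e he => ?_
  rw [Finset.sum_comm, Finset.sum_eq_single_of_mem e he fun e' _ h => sum_mul_apply_eq_zero h.symm]
  simp [← Units.val_mul]

lemma card_lt_abs_two_mul_sum_mul_le (T : Finset E) (t : ℕ) :
    (#{y : E → ℤˣ | (t : ℤ) < |2 * ∑ e ∈ T, (y e : ℤ)|} : ℤ) * (t + 1) ^ 2 ≤
      4 * #T * 2 ^ Fintype.card E := by
  rw [mul_assoc, ← sum_sq_sum, Finset.mul_sum, ← nsmul_eq_mul, ← Finset.sum_const]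
  refine (Finset.sum_le_sum fun y hy => ?_).trans
    (Finset.sum_le_sum_of_subset_of_nonneg (Finset.filter_subset _ _) fun y _ _ => by positivity)
  simp only [Finset.mem_filter, Finset.mem_univ, true_and] at hy
  calc ((t : ℤ) + 1) ^ 2 ≤ |2 * ∑ e ∈ T, (y e : ℤ)| ^ 2 := by gcongr; omega
    _ = 4 * (∑ e ∈ T, (y e : ℤ)) ^ 2 := by rw [sq_abs]; ring

lemma majorityCorr_neg (x : E → ℤˣ) : majorityCorr (-x) = -majorityCorr x := by
  simp [majorityCorr, signSum_neg]

lemma majorityCorr_comp_perm (x : E → ℤˣ) (σ : Equiv.Perm E) :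
    majorityCorr (x ∘ σ) = majorityCorr x := by
  unfold majorityCorr
  rw [← Equiv.sum_comp (σ.symm.arrowCongr (Equiv.refl ℤˣ))]
  refine Finset.sum_congr rfl fun y _ => ?_
  have h : (σ.symm.arrowCongr (Equiv.refl ℤˣ)) y = y ∘ σ := rfl
  rw [h, show x ∘ σ * y ∘ σ = (x * y) ∘ σ from rfl, signSum_comp_perm, signSum_comp_perm]

/-- `majorityCorr x` depends only on the number of positive entries of `x`. -/
lemma majorityCorr_congr {x u : E → ℤˣ} (h : signSum x = signSum u) :
    majorityCorr x = majorityCorr u := by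
  have hone : #{e | u e = 1} = #{e | x e = 1} := by
    rw [signSum_eq, signSum_eq] at h
    omega
  have hcard : ∀ c : ℤˣ, Fintype.card {e // u e = c} = Fintype.card {e // x e = c} := by
    intro c
    have hu := Finset.card_filter_add_card_filter_not (s := (Finset.univ : Finset E)) (u · = 1)
    have hx := Finset.card_filter_add_card_filter_not (s := (Finset.univ : Finset E)) (x · = 1)
    rw [Fintype.card_subtype, Fintype.card_subtype]
    rcases Int.units_eq_one_or c with rfl | rfl
    · exact hone
    · simp only [← ne_eq, Int.units_ne_iff_eq_neg] at hu hx
      omega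
  let σ : Equiv.Perm E := Equiv.ofFiberEquiv fun c => Fintype.equivOfCardEq (hcard c)
  have hσ : x ∘ σ = u := funext fun e => Equiv.ofFiberEquiv_map _ e
  rw [← hσ, majorityCorr_comp_perm]

lemma card_abs_signSum_mul_le (x : E → ℤˣ) (t : ℕ) :
    #{y : E → ℤˣ | |signSum (x * y)| ≤ t} = #{y : E → ℤˣ | |signSum y| ≤ t} := by
  refine Finset.card_equiv (Equiv.mulLeft x) fun y => ?_
  simp

lemma abs_sign_mul_sub_le (a b c : ℤ) (t : ℕ) :
    |a.sign * (b.sign - (b - c).sign)| ≤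
      2 * ((if |b| ≤ t then 1 else 0) + if (t : ℤ) < |c| then 1 else 0) := by
  have ha : |a.sign| ≤ 1 := by
    rcases Int.sign_trichotomy a with h | h | h <;> simp [h]
  have hb : |b.sign - (b - c).sign| ≤
      2 * ((if |b| ≤ t then 1 else 0) + if (t : ℤ) < |c| then 1 else 0) := by
    have h2 : |b.sign - (b - c).sign| ≤ 2 := by
      rcases Int.sign_trichotomy b with h | h | h <;>
        rcases Int.sign_trichotomy (b - c) with h' | h' | h' <;> simp [h, h']
    split_ifs with h h' h'
    · omega
    · omega
    · omega
    · have : b.sign = (b - c).sign := by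
        rcases lt_trichotomy b 0 with hb | hb | hb
        · rw [Int.sign_eq_neg_one_of_neg hb, Int.sign_eq_neg_one_of_neg]
          grind
        · grind
        · rw [Int.sign_eq_one_of_pos hb, Int.sign_eq_one_of_pos]
          grind
      simp [this]
  rw [abs_mul]
  nlinarith [abs_nonneg (b.sign - (b - c).sign)]

lemma abs_majorityCorr_mul_le_of_nonneg {x : E → ℤˣ} (hx : 0 ≤ signSum x) (t : ℕ) :
    |majorityCorr x| * (t + 1) ^ 2 ≤
      #{y : E → ℤˣ | |signSum y| ≤ t} * (t + 1) ^ 2 + 4 * signSum x * 2 ^ Fintype.card E := by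
  obtain ⟨s, hs⟩ := Int.eq_ofNat_of_zero_le hx
  have hle : s ≤ #{e | x e = 1} := by
    have h1 := signSum_eq x
    have h2 : #{e | x e = 1} ≤ Fintype.card E := Finset.card_le_univ _
    omega
  obtain ⟨T, hT, hTs⟩ := Finset.exists_subset_card_eq hle
  have hxT : ∀ e ∈ T, x e = 1 := fun e he => by simpa using hT he
  -- Flipping the entries in `T` turns `x` into a rearrangement of `-x`.
  let u : E → ℤˣ := fun e => if e ∈ T then -1 else x e
  have hsum : ∀ y : E → ℤˣ, signSum (u * y) = signSum (x * y) - 2 * ∑ e ∈ T, (y e : ℤ) := by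
    intro y
    have hite : ∑ e ∈ T, (y e : ℤ) = ∑ e, if e ∈ T then (y e : ℤ) else 0 := by simp
    rw [hite, Finset.mul_sum, signSum, signSum, ← Finset.sum_sub_distrib]
    refine Finset.sum_congr rfl fun e _ => ?_
    by_cases he : e ∈ T
    · simp [u, he, hxT e he]
      ring
    · simp [u, he]
  have hu : majorityCorr u = -majorityCorr x := by
    rw [← majorityCorr_neg]
    apply majorityCorr_congr
    have := hsum 1
    simp only [mul_one, Pi.one_apply, Units.val_one, Finset.sum_const, hTs] at this
    rw [this, signSum_neg, hs]
    simp
    ring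
  have hcorr : |majorityCorr x| ≤ #{y : E → ℤˣ | |signSum y| ≤ t} +
      #{y : E → ℤˣ | (t : ℤ) < |2 * ∑ e ∈ T, (y e : ℤ)|} := by
    have h2 : 2 * majorityCorr x = majorityCorr x - majorityCorr u := by rw [hu]; ring
    have h3 : |2 * majorityCorr x| ≤ 2 * (#{y : E → ℤˣ | |signSum y| ≤ t} +
        #{y : E → ℤˣ | (t : ℤ) < |2 * ∑ e ∈ T, (y e : ℤ)|}) := by
      rw [h2, ← card_abs_signSum_mul_le x, majorityCorr, majorityCorr, ← Finset.sum_sub_distrib,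
        Finset.natCast_card_filter, Finset.natCast_card_filter, ← Finset.sum_add_distrib,
        Finset.mul_sum]
      refine (Finset.abs_sum_le_sum_abs _ _).trans (Finset.sum_le_sum fun y _ => ?_)
      rw [← mul_sub, hsum]
      exact abs_sign_mul_sub_le _ _ _ _
    rw [abs_mul, abs_two] at h3
    omega
  have htail := card_lt_abs_two_mul_sum_mul_le T t
  rw [hTs] at htail
  rw [hs]
  nlinarith [mul_le_mul_of_nonneg_right hcorr (sq_nonneg ((t : ℤ) + 1))]

lemma abs_majorityCorr_mul_le (x : E → ℤˣ) (t : ℕ) :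
    |majorityCorr x| * (t + 1) ^ 2 ≤
      #{y : E → ℤˣ | |signSum y| ≤ t} * (t + 1) ^ 2 + 4 * |signSum x| * 2 ^ Fintype.card E := by
  rcases le_total 0 (signSum x) with h | h
  · rw [abs_of_nonneg h]
    exact abs_majorityCorr_mul_le_of_nonneg h t
  · have := abs_majorityCorr_mul_le_of_nonneg (x := -x) (by rw [signSum_neg]; omega) t
    rwa [majorityCorr_neg, abs_neg, signSum_neg, ← abs_of_nonpos h] at this

lemma eight_mul_card_majority (hE : Odd (Fintype.card E)) :
    (8 * #{p : (E → ℤˣ) × (E → ℤˣ) |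
        0 < signSum p.1 ∧ 0 < signSum p.2 ∧ 0 < signSum (p.1 * p.2)} : ℤ) =
      4 ^ Fintype.card E + ∑ x : E → ℤˣ, Int.sign (signSum x) * majorityCorr x := by
  have hind : ∀ y : E → ℤˣ, (signSum y).sign = if 0 < signSum y then 1 else -1 := by
    intro y
    split_ifs with h
    · exact Int.sign_eq_one_of_pos h
    · exact Int.sign_eq_neg_one_of_neg (lt_of_le_of_ne (not_lt.mp h) (signSum_ne_zero hE y))
  have hexp : (8 * #{p : (E → ℤˣ) × (E → ℤˣ) |
        0 < signSum p.1 ∧ 0 < signSum p.2 ∧ 0 < signSum (p.1 * p.2)} : ℤ) =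
      ∑ x : E → ℤˣ, ∑ y : E → ℤˣ, (1 + (signSum x).sign) * (1 + (signSum y).sign) *
        (1 + (signSum (x * y)).sign) := by
    rw [Finset.natCast_card_filter, Finset.mul_sum, Fintype.sum_prod_type]
    refine Finset.sum_congr rfl fun x _ => Finset.sum_congr rfl fun y _ => ?_
    simp only [hind]
    split_ifs <;> simp_all
  have hy : ∀ x : E → ℤˣ, ∑ y : E → ℤˣ, ((signSum y).sign + (signSum (x * y)).sign) = 0 := by
    intro x
    have h := Equiv.sum_comp (Equiv.neg (E → ℤˣ))
      fun y : E → ℤˣ => (signSum y).sign + (signSum (x * y)).sign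
    simp only [Equiv.neg_apply, mul_neg, signSum_neg, Int.sign_neg, ← neg_add,
      Finset.sum_neg_distrib] at h
    omega
  have hx : ∑ x : E → ℤˣ, ((signSum x).sign * 2 ^ Fintype.card E + majorityCorr x) = 0 := by
    have h := Equiv.sum_comp (Equiv.neg (E → ℤˣ))
      fun x : E → ℤˣ => (signSum x).sign * 2 ^ Fintype.card E + majorityCorr x
    simp only [Equiv.neg_apply, majorityCorr_neg, signSum_neg, Int.sign_neg, neg_mul, ← neg_add,
      Finset.sum_neg_distrib] at h
    omega
  have hinner : ∀ x : E → ℤˣ, ∑ y : E → ℤˣ, (1 + (signSum x).sign) * (1 + (signSum y).sign) *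
        (1 + (signSum (x * y)).sign) =
      2 ^ Fintype.card E + ((signSum x).sign * 2 ^ Fintype.card E + majorityCorr x) +
        (signSum x).sign * majorityCorr x := by
    intro x
    calc _ = ∑ y : E → ℤˣ, ((1 + (signSum x).sign) +
          (1 + (signSum x).sign) * ((signSum y).sign + (signSum (x * y)).sign) +
          (1 + (signSum x).sign) * ((signSum y).sign * (signSum (x * y)).sign)) :=
          Finset.sum_congr rfl fun y _ => by ring
      _ = 2 ^ Fintype.card E * (1 + (signSum x).sign) + (1 + (signSum x).sign) * 0 +
          (1 + (signSum x).sign) * majorityCorr x := by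
          rw [Finset.sum_add_distrib, Finset.sum_add_distrib, ← Finset.mul_sum, ← Finset.mul_sum,
            hy]
          simp [majorityCorr]
      _ = _ := by ring
  rw [hexp, Finset.sum_congr rfl fun x _ => hinner x, Finset.sum_add_distrib,
    Finset.sum_add_distrib, hx]
  simp [← mul_pow]

lemma sum_abs_signSum_le :
    (∑ x : E → ℤˣ, |signSum x| : ℝ) ≤ 2 ^ Fintype.card E * √(Fintype.card E) := by
  refine abs_le_of_sq_le_sq' ?_ (by positivity) |>.2
  have h := sq_sum_le_card_mul_sum_sq (s := (Finset.univ : Finset (E → ℤˣ)))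
    (f := fun x => (|signSum x| : ℝ))
  have h2 : (∑ x : E → ℤˣ, (|signSum x| : ℝ) ^ 2) = Fintype.card E * 2 ^ Fintype.card E := by
    have := sum_sq_sum (Finset.univ : Finset E)
    simp only [sq_abs]
    exact_mod_cast this
  rw [h2] at h
  refine h.trans_eq ?_
  rw [mul_pow, Real.sq_sqrt (by positivity)]
  simp
  ring

lemma abs_sum_sign_mul_majorityCorr_le (t : ℕ) :
    |∑ x : E → ℤˣ, Int.sign (signSum x) * majorityCorr x| / (4 : ℝ) ^ Fintype.card E ≤
      (2 * t + 1) * ((Fintype.card E).choose (Fintype.card E / 2) / 2 ^ Fintype.card E) +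
        4 * √(Fintype.card E) / (t + 1) ^ 2 := by
  have habs : |∑ x : E → ℤˣ, Int.sign (signSum x) * majorityCorr x| ≤
      ∑ x : E → ℤˣ, |majorityCorr x| := by
    refine (Finset.abs_sum_le_sum_abs _ _).trans (Finset.sum_le_sum fun x _ => ?_)
    rw [abs_mul]
    have : |(signSum x).sign| ≤ 1 := by
      rcases Int.sign_trichotomy (signSum x) with h | h | h <;> simp [h]
    nlinarith [abs_nonneg (majorityCorr x)]
  have hsum := Finset.sum_le_sum fun (x : E → ℤˣ) (_ : x ∈ Finset.univ) =>
    abs_majorityCorr_mul_le x t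
  rw [← Finset.sum_mul, Finset.sum_add_distrib, ← Finset.sum_mul, ← Finset.sum_mul,
    ← Finset.mul_sum] at hsum
  simp only [Finset.sum_const, Finset.card_univ, Fintype.card_fun, Fintype.card_units_int,
    nsmul_eq_mul] at hsum
  have hsmall := card_abs_signSum_le (E := E) t
  have habs' := (Int.cast_le (R := ℝ)).mpr habs
  have hsum' := (Int.cast_le (R := ℝ)).mpr hsum
  have hsmall' := (Nat.cast_le (α := ℝ)).mpr hsmall
  push_cast at habs' hsum' hsmall'
  have hS := sum_abs_signSum_le (E := E)
  have hfour : (4 : ℝ) ^ Fintype.card E = 2 ^ Fintype.card E * 2 ^ Fintype.card E := by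
    rw [← mul_pow]
    norm_num
  push_cast
  rw [hfour, div_le_iff₀ (by positivity)]
  refine habs'.trans (le_of_mul_le_mul_right (hsum'.trans ?_)
    (show (0 : ℝ) < (t + 1) ^ 2 by positivity))
  calc _ ≤ 2 ^ Fintype.card E * ((2 * t + 1) * ((Fintype.card E).choose (Fintype.card E / 2) : ℝ)) *
        (t + 1) ^ 2 + 4 * (2 ^ Fintype.card E * √(Fintype.card E)) * 2 ^ Fintype.card E := by
        gcongr
    _ = _ := by field_simp

end SignVectors

lemma two_mul_add_one_mul_centralBinom_sq_le (n : ℕ) :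
    (2 * n + 1) * n.centralBinom ^ 2 ≤ 16 ^ n := by
  induction n with
  | zero => simp
  | succ n ih =>
    have h := Nat.succ_mul_centralBinom_succ n
    refine Nat.le_of_mul_le_mul_left ?_ (show 0 < (n + 1) ^ 2 by positivity)
    calc (n + 1) ^ 2 * ((2 * (n + 1) + 1) * (n + 1).centralBinom ^ 2)
        = (2 * n + 3) * ((n + 1) * (n + 1).centralBinom) ^ 2 := by ring
      _ = (4 * ((2 * n + 3) * (2 * n + 1))) * ((2 * n + 1) * n.centralBinom ^ 2) := by
          rw [h]; ring
      _ ≤ (16 * (n + 1) ^ 2) * 16 ^ n := Nat.mul_le_mul (by nlinarith) ih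
      _ = (n + 1) ^ 2 * 16 ^ (n + 1) := by ring

lemma choose_middle_div_two_pow_le (m : ℕ) :
    ((2 * m + 1).choose m : ℝ) / 2 ^ (2 * m + 1) ≤ 1 / √(2 * m + 1) := by
  have hchoose : (m + 1).centralBinom = 2 * (2 * m + 1).choose m := by
    have h := Nat.choose_symm_half m
    rw [Nat.centralBinom, show 2 * (m + 1) = 2 * m + 1 + 1 by ring, Nat.choose_succ_succ']
    omega
  have h := (Nat.cast_le (α := ℝ)).mpr (two_mul_add_one_mul_centralBinom_sq_le (m + 1))
  rw [hchoose] at h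
  push_cast at h
  rw [div_le_div_iff₀ (by positivity) (by positivity), one_mul]
  refine abs_le_of_sq_le_sq' ?_ (by positivity) |>.2
  have hpow : ((2 : ℝ) ^ (2 * m + 1)) ^ 2 = 4 * 16 ^ m := by
    rw [← pow_mul, show (2 * m + 1) * 2 = 4 * m + 2 by ring, pow_add, pow_mul]
    norm_num
    ring
  rw [mul_pow, Real.sq_sqrt (by positivity), hpow]
  rw [pow_succ 16] at h
  nlinarith [sq_nonneg ((2 * m + 1).choose m : ℝ)]

/-- The identification of the four colors with pairs of signs under which the third nontrivial
character is the product of the first two. -/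
noncomputable def colorEquivSigns : Fin 4 ≃ ℤˣ × ℤˣ :=
  Equiv.ofBijective ![(1, 1), (1, -1), (-1, 1), (-1, -1)] (by decide)

lemma card_majority_colorings {E : Type*} [Fintype E] [DecidableEq E] {m : ℕ}
    (hE : Fintype.card E = 2 * m + 1) :
    #{f : E → Fin 4 | m < #(Est f 0 1) ∧ m < #(Est f 0 2) ∧ m < #(Est f 0 3)} =
      #{p : (E → ℤˣ) × (E → ℤˣ) |
        0 < signSum p.1 ∧ 0 < signSum p.2 ∧ 0 < signSum (p.1 * p.2)} := by
  refine Finset.card_equiv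
    (((Equiv.refl E).arrowCongr colorEquivSigns).trans
      (Equiv.arrowProdEquivProdArrow E (fun _ => ℤˣ) (fun _ => ℤˣ))) fun f => ?_
  have hpos : ∀ y : E → ℤˣ, 0 < signSum y ↔ m < #{e | y e = 1} := by
    intro y
    rw [signSum_eq, hE]
    omega
  have h1 : ∀ s : Fin 4, (s = 0 ∨ s = 1) ↔ (colorEquivSigns s).1 = 1 := by
    simp only [colorEquivSigns, Equiv.ofBijective_apply]; decide
  have h2 : ∀ s : Fin 4, (s = 0 ∨ s = 2) ↔ (colorEquivSigns s).2 = 1 := by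
    simp only [colorEquivSigns, Equiv.ofBijective_apply]; decide
  have h3 : ∀ s : Fin 4, (s = 0 ∨ s = 3) ↔ (colorEquivSigns s).1 * (colorEquivSigns s).2 = 1 := by
    simp only [colorEquivSigns, Equiv.ofBijective_apply]; decide
  simp only [Finset.mem_filter, Finset.mem_univ, true_and, hpos, Est, h1, h2, h3]
  rfl

/-- For uniform random 4-colorings of finite sets `E_m` with `|E_m| = 2m+1`, the
probability that each of `E_{ab}(f)`, `E_{ac}(f)`, `E_{ad}(f)` has more than `m` elements
(the majority property) tends to `1/8` as `m → ∞`. -/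
theorem majority_limit_abcd (E : ℕ → Type*) [∀ m, Fintype (E m)] [∀ m, DecidableEq (E m)]
    (hcard : ∀ m, Fintype.card (E m) = 2 * m + 1) :
    Filter.Tendsto
      (fun m =>
        ((Finset.univ.filter (fun f : E m → Fin 4 =>
            m < (Est f 0 1).card ∧ m < (Est f 0 2).card ∧ m < (Est f 0 3).card)).card : ℝ)
          / 4 ^ (2 * m + 1))
      Filter.atTop (nhds (1 / 8)) := by
  let D : ℕ → ℝ := fun m =>
    ((∑ x : E m → ℤˣ, Int.sign (signSum x) * majorityCorr x : ℤ) : ℝ) / 4 ^ (2 * m + 1)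
  let L : ℕ → ℝ := fun m => (2 * (m : ℝ) + 1) ^ (1 / 8 : ℝ)
  have hL : Filter.Tendsto L Filter.atTop Filter.atTop :=
    (tendsto_rpow_atTop (by norm_num)).comp
      (Filter.tendsto_atTop_add_const_right _ _
        (tendsto_natCast_atTop_atTop.const_mul_atTop (by norm_num)))
  have hbound : ∀ m, ‖D m‖ ≤ 2 * (L m)⁻¹ + (L m)⁻¹ ^ 4 + 4 * (L m)⁻¹ ^ 2 := by
    intro m
    have hL0 : 0 < L m := by positivity
    have hsqrt : √(2 * (m : ℝ) + 1) = L m ^ 4 := by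
      rw [Real.sqrt_eq_rpow, ← Real.rpow_mul_natCast (by positivity)]
      norm_num
    have h := abs_sum_sign_mul_majorityCorr_le (E := E m) ⌊L m ^ 3⌋₊
    have hc := choose_middle_div_two_pow_le m
    rw [hcard, show (2 * m + 1) / 2 = m by omega] at h
    push_cast at h
    rw [hsqrt] at h hc
    have hfl := Nat.floor_le (show 0 ≤ L m ^ 3 by positivity)
    have hlt := Nat.lt_floor_add_one (L m ^ 3)
    have hD : ‖D m‖ = |∑ x : E m → ℤˣ, ((signSum x).sign : ℝ) * majorityCorr x| /
        4 ^ (2 * m + 1) := by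
      simp [D]
    rw [hD]
    refine h.trans ?_
    calc _ ≤ (2 * L m ^ 3 + 1) * (1 / L m ^ 4) + 4 * L m ^ 4 / (L m ^ 3) ^ 2 := by gcongr
      _ = _ := by field_simp
  have hD : Filter.Tendsto D Filter.atTop (nhds 0) := by
    refine squeeze_zero_norm hbound ?_
    have hi := hL.inv_tendsto_atTop
    have := ((hi.const_mul 2).add (hi.pow 4)).add ((hi.pow 2).const_mul 4)
    simpa using this
  have heq : ∀ m, ((Finset.univ.filter (fun f : E m → Fin 4 =>
      m < (Est f 0 1).card ∧ m < (Est f 0 2).card ∧ m < (Est f 0 3).card)).card : ℝ)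
        / 4 ^ (2 * m + 1) = 1 / 8 + D m / 8 := by
    intro m
    have h := eight_mul_card_majority (E := E m) ⟨m, hcard m⟩
    rw [← card_majority_colorings (hcard m), hcard m] at h
    have h' := congrArg (Int.cast : ℤ → ℝ) h
    push_cast at h'
    simp only [D]
    push_cast
    field_simp
    linarith
  simp only [heq]
  have hlim := (hD.div_const 8).const_add (1 / 8)
  rwa [zero_div, add_zero] at hlim
end
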